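/- Let A and B be 8×8 matrices with entries in R, with three-spin tensor components a_{κ,λ,μ} and b_{κ,λ,μ}. Then for all k,l,m ∈ {1,2,3}, the fully entangled rank-three tensor component of the product satisfies Tr((σ_k ⊗ σ_l ⊗ σ_m) AB) = (1/8)[ a_{k,l,m} b_{0,0,0} + a_{k,l,0} b_{0,0,m} + a_{k,0,m} b_{0,l,0} + a_{0,l,m} b_{k,0,0} + a_{k,0,0} b_{0,l,m} + a_{0,0,m} b_{k,l,0} + a_{0,l,0} b_{k,0,m} + a_{0,0,0} b_{k,l,m} + i ε_{k k₁ k₂}( a_{k₁,0,0} b_{k₂,l,m} + a_{k₁,l,0} b_{k₂,0,m} + a_{k₁,0,m} b_{k₂,l,0} + a_{k₁,l,m} b_{k₂,0,0} ) + i ε_{l l₁ l₂}( a_{0,l₁,0} b_{k,l₂,m} + a_{k,l₁,0} b_{0,l₂,m} + a_{0,l₁,m} b_{k,l₂,0} + a_{k,l₁,m} b_{0,l₂,0} ) + i ε_{m m₁ m₂}( a_{0,0,m₁} b_{k,l,m₂} + a_{0,l,m₁} b_{k,0,m₂} + a_{k,0,m₁} b_{0,l,m₂} + a_{k,l,m₁}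 b_{0,0,m₂} ) − ε_{k k₁ k₂} ε_{l l₁ l₂}( a_{k₁,l₁,0} b_{k₂,l₂,m} + a_{k₁,l₁,m} b_{k₂,l₂,0} ) − ε_{k k₁ k₂} ε_{m m₁ m₂}( a_{k₁,0,m₁} b_{k₂,l,m₂} + a_{k₁,l,m₁} b_{k₂,0,m₂} ) − ε_{l l₁ l₂} ε_{m m₁ m₂}( a_{0,l₁,m₁} b_{k,l₂,m₂} + a_{k,l₁,m₁} b_{0,l₂,m₂} ) − i ε_{k k₁ k₂} ε_{l l₁ l₂} ε_{m m₁ m₂} a_{k₁,l₁,m₁} b_{k₂,l₂,m₂} ]. -/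

import Mathlib

open Matrix Kronecker

/-- The Pauli matrices `σ₀ = I₂, σ₁, σ₂, σ₃`, with complex entries regarded as
elements of an associative unital `ℂ`-algebra `R` via the algebra map. -/
noncomputable def pauli (R : Type*) [Ring R] [Algebra ℂ R] : Fin 4 → Matrix (Fin 2) (Fin 2) R
  | 0 => !![1, 0; 0, 1]
  | 1 => !![0, 1; 1, 0]
  | 2 => !![0, -(algebraMap ℂ R Complex.I); algebraMap ℂ R Complex.I, 0]
  | 3 => !![1, 0; 0, -1]

/-- The Levi-Civita symbol `ε_{ijk}` on indices in `{1,2,3}` (represented by `Fin 3`). -/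
def eps (i j k : Fin 3) : ℤ :=
  ((j.val : ℤ) - i.val) * ((k.val : ℤ) - i.val) * ((k.val : ℤ) - j.val) / 2

/-!
Writing `A = ½ ∑ κ, σ_κ a_κ` and using `σ_k σ_j = δ_kj + i ε_kjl σ_l` gives, for one spin,
`Tr (σ_k A B) = ½ (a_k b_0 + a_0 b_k + i ε_kjl a_j b_l)`. Commutativity of the entries plays no part
in this, so the entries may themselves be matrices. An `8 × 8` matrix is a `2 × 2` matrix of `2 × 2`
matrices of `2 × 2` matrices, its three-spin components are iterated one-spin components, and the
theorem is the one-spin rule applied once for each spin.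
-/

section CentralEntries

variable {K R l m n p : Type*} [CommSemiring K] [Semiring R] [Algebra K R] [Fintype m]

theorem map_algebraMap_mul_smul (P : Matrix l m K) (r : R) (A : Matrix m n R) :
    P.map (algebraMap K R) * r • A = r • (P.map (algebraMap K R) * A) := by
  ext i j
  simp only [mul_apply, map_apply, Matrix.smul_apply, smul_eq_mul, Finset.mul_sum]
  exact Finset.sum_congr rfl fun _ _ => (Algebra.left_comm _ _ _).symm

/- The inner trace is the partial trace of `(P ⊗ 1) A` over the first factor. -/
theorem trace_map_algebraMap_kronecker_mul [Fintype n] [DecidableEq n] (P : Matrix m m K)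
    (Q : Matrix n n R) (A : Matrix (m × n) (m × n) R) :
    ((P.map (algebraMap K R) ⊗ₖ Q) * A).trace =
      (Q * (P.map (algebraMap K (Matrix n n R)) * (compRingEquiv m n R).symm A).trace).trace := by
  simp only [trace, diag, mul_apply, kroneckerMap_apply, map_apply, Fintype.sum_prod_type,
    ← Algebra.smul_def, Matrix.sum_apply, Matrix.smul_apply, compRingEquiv_symm_apply,
    comp_symm_apply, Finset.mul_sum, mul_smul_comm, smul_mul_assoc]
  rw [Finset.sum_comm]
  refine Finset.sum_congr rfl fun j _ => ?_
  simp_rw [Finset.sum_comm (γ := n)]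

/-- A matrix indexed by a triple product, viewed as a matrix of matrices of matrices; the outermost
level carries the first index. It turns three-spin components into iterated one-spin components. -/
def tripleBlocks [Fintype n] [Fintype p] :
    Matrix ((m × n) × p) ((m × n) × p) R ≃+* Matrix m m (Matrix n n (Matrix p p R)) :=
  (compRingEquiv (m × n) p R).symm.trans (compRingEquiv m n (Matrix p p R)).symm

end CentralEntries

section Pauli

variable {R : Type*} [Ring R] [Algebra ℂ R]

theorem pauli_zero : pauli R 0 = 1 := one_fin_two.symm

theorem pauli_eq_map (κ : Fin 4) : pauli R κ = (pauli ℂ κ).map (algebraMap ℂ R) := by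
  ext i j
  fin_cases κ <;> fin_cases i <;> fin_cases j <;> simp [pauli]

theorem pauli_kronecker_pauli_eq_map (κ μ : Fin 4) :
    pauli R κ ⊗ₖ pauli R μ = (pauli ℂ κ ⊗ₖ pauli ℂ μ).map (algebraMap ℂ R) := by
  simp only [kroneckerMap_map, map_mul, pauli_eq_map (R := R), kroneckerMap_map_left,
    kroneckerMap_map_right]

theorem algebraMap_I_mul_self : algebraMap ℂ R Complex.I * algebraMap ℂ R Complex.I = -1 := by
  rw [← map_mul, Complex.I_mul_I, map_neg, map_one]

theorem pauli_succ_mul_pauli_succ (k j : Fin 3) :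
    pauli R k.succ * pauli R j.succ =
      (if k = j then 1 else 0) + Complex.I • ∑ l : Fin 3, eps k j l • pauli R l.succ := by
  ext i i'
  simp only [Matrix.add_apply, Matrix.smul_apply, Fin.sum_univ_three]
  fin_cases k <;> fin_cases j <;> fin_cases i <;> fin_cases i' <;>
    simp [pauli, eps, Algebra.smul_def, algebraMap_I_mul_self]

/-- The one-spin tensor component `a_κ = Tr (σ_κ A)`. -/
noncomputable def pauliCoeff (κ : Fin 4) : Matrix (Fin 2) (Fin 2) R →ₗ[ℂ] R :=
  traceLinearMap (Fin 2) ℂ R ∘ₗ LinearMap.mulLeft ℂ (pauli R κ)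

theorem pauliCoeff_apply (κ : Fin 4) (A : Matrix (Fin 2) (Fin 2) R) :
    pauliCoeff κ A = (pauli R κ * A).trace := rfl

theorem sum_pauliCoeff_smul_pauli (A : Matrix (Fin 2) (Fin 2) R) :
    ∑ κ, pauliCoeff κ A • pauli R κ = (2 : ℂ) • A := by
  have I_mul_I_mul (x : R) :
      algebraMap ℂ R Complex.I * (x * algebraMap ℂ R Complex.I) = -x := by
    rw [← Algebra.commutes, ← mul_assoc, algebraMap_I_mul_self, neg_one_mul]
  ext i j
  simp only [Fin.sum_univ_four, Matrix.add_apply, Matrix.smul_apply, pauliCoeff_apply,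
    trace_fin_two, mul_apply, Fin.sum_univ_two, smul_eq_mul, two_smul]
  fin_cases i <;> fin_cases j <;> simp [pauli, add_mul, mul_assoc, I_mul_I_mul] <;> abel

theorem pauliCoeff_succ_pauli_mul (k j : Fin 3) (B : Matrix (Fin 2) (Fin 2) R) :
    pauliCoeff k.succ (pauli R j.succ * B) =
      (if k = j then pauliCoeff 0 B else 0) +
        Complex.I • ∑ l : Fin 3, eps k j l • pauliCoeff l.succ B := by
  rw [pauliCoeff_apply, ← mul_assoc, pauli_succ_mul_pauli_succ]
  simp only [add_mul, ite_mul, one_mul, zero_mul, smul_mul_assoc, Finset.sum_mul, trace_add,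
    trace_smul, trace_sum, apply_ite trace, trace_zero, pauliCoeff_apply, pauli_zero]

theorem trace_pauli_kronecker_mul (κ μ ν : Fin 4)
    (A : Matrix ((Fin 2 × Fin 2) × Fin 2) ((Fin 2 × Fin 2) × Fin 2) R) :
    ((pauli R κ ⊗ₖ pauli R μ ⊗ₖ pauli R ν) * A).trace =
      pauliCoeff ν (pauliCoeff μ (pauliCoeff κ (tripleBlocks A))) := by
  rw [pauli_kronecker_pauli_eq_map, trace_map_algebraMap_kronecker_mul,
    ← pauli_kronecker_pauli_eq_map, pauli_eq_map κ, trace_map_algebraMap_kronecker_mul,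
    ← pauli_eq_map]
  rfl

end Pauli

section PauliProd

variable {M N : Type*} [AddCommGroup M] [AddCommGroup N]

/-- The contraction `ε_{k k₁ k₂} F_{k₁ k₂}` over the vector indices `k₁, k₂ ∈ {1, 2, 3}`,
for an array `F` that is also defined at the scalar index `0`. -/
def epsContract (k : Fin 3) (F : Fin 4 → Fin 4 → M) : M :=
  ∑ k₁ : Fin 3, ∑ k₂ : Fin 3, eps k k₁ k₂ • F k₁.succ k₂.succ

theorem epsContract_add (k : Fin 3) (F G : Fin 4 → Fin 4 → M) :
    epsContract k (fun κ μ => F κ μ + G κ μ) = epsContract k F + epsContract k G := by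
  simp only [epsContract, smul_add, Finset.sum_add_distrib]

theorem map_epsContract {H : Type*} [FunLike H M N] [AddMonoidHomClass H M N] (f : H)
    (k : Fin 3) (F : Fin 4 → Fin 4 → M) :
    f (epsContract k F) = epsContract k fun κ μ => f (F κ μ) := by
  simp only [epsContract, map_sum, map_zsmul]

theorem epsContract_smul {S : Type*} [DistribSMul S M] (k : Fin 3) (z : S)
    (F : Fin 4 → Fin 4 → M) : epsContract k (fun κ μ => z • F κ μ) = z • epsContract k F :=
  (map_epsContract (DistribSMul.toAddMonoidHom M z) k F).symm

variable [Module ℂ M] [Module ℂ N]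

/-- The vector component `½ (F_{k0} + F_{0k} + i ε_{k k₁ k₂} F_{k₁ k₂})` of the product of two
one-spin matrices, where `F κ μ` is the product of the component `κ` of the first factor and the
component `μ` of the second. -/
noncomputable def pauliProd (k : Fin 3) (F : Fin 4 → Fin 4 → M) : M :=
  (1 / 2 : ℂ) • (F k.succ 0 + F 0 k.succ + Complex.I • epsContract k F)

theorem map_pauliProd (f : M →ₗ[ℂ] N) (k : Fin 3) (F : Fin 4 → Fin 4 → M) :
    f (pauliProd k F) = pauliProd k fun κ μ => f (F κ μ) := by
  simp only [pauliProd, map_smul, map_add, map_epsContract]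

variable {R : Type*} [Ring R] [Algebra ℂ R]

theorem pauliCoeff_mul (k : Fin 3) (A B : Matrix (Fin 2) (Fin 2) R) :
    pauliCoeff k.succ (A * B) = pauliProd k fun κ μ => pauliCoeff κ A * pauliCoeff μ B := by
  have expand_left : (2 : ℂ) • pauliCoeff k.succ (A * B) =
      ∑ κ, pauliCoeff κ A * pauliCoeff k.succ (pauli R κ * B) := by
    rw [← map_smul, ← smul_mul_assoc, ← sum_pauliCoeff_smul_pauli, Finset.sum_mul, map_sum]
    refine Finset.sum_congr rfl fun κ _ => ?_
    rw [smul_mul_assoc, pauliCoeff_apply k.succ, pauli_eq_map k.succ, map_algebraMap_mul_smul,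
      ← pauli_eq_map, trace_smul, smul_eq_mul, ← pauliCoeff_apply]
  have expand_right : ∑ κ, pauliCoeff κ A * pauliCoeff k.succ (pauli R κ * B) =
      (2 : ℂ) • pauliProd k fun κ μ => pauliCoeff κ A * pauliCoeff μ B := by
    rw [Fin.sum_univ_succ, pauli_zero, one_mul]
    simp only [pauliCoeff_succ_pauli_mul, mul_add, mul_ite, mul_zero, mul_smul_comm,
      Finset.mul_sum, Finset.sum_add_distrib, Finset.sum_ite_eq, Finset.mem_univ, if_true,
      pauliProd, epsContract, Finset.smul_sum]
    module
  exact smul_right_injective R (two_ne_zero' ℂ) (expand_left.trans expand_right)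

end PauliProd

/-- Fully entangled rank-three tensor component of the product of two 8×8 matrices
over a `ℂ`-algebra, with single, double, and triple Levi-Civita torque terms. -/
theorem three_spin_product_tensor (R : Type*) [Ring R] [Algebra ℂ R]
    (A B : Matrix ((Fin 2 × Fin 2) × Fin 2) ((Fin 2 × Fin 2) × Fin 2) R)
    (a b : Fin 4 → Fin 4 → Fin 4 → R)
    (ha : ∀ κ μ ν : Fin 4,
      a κ μ ν = ((pauli R κ ⊗ₖ pauli R μ ⊗ₖ pauli R ν) * A).trace)
    (hb : ∀ κ μ ν : Fin 4,
      b κ μ ν = ((pauli R κ ⊗ₖ pauli R μ ⊗ₖ pauli R ν) * B).trace) :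
    ∀ k l m : Fin 3,
      ((pauli R k.succ ⊗ₖ pauli R l.succ ⊗ₖ pauli R m.succ) * (A * B)).trace =
        (1/8 : ℂ) •
          (a k.succ l.succ m.succ * b 0 0 0 + a k.succ l.succ 0 * b 0 0 m.succ
            + a k.succ 0 m.succ * b 0 l.succ 0 + a 0 l.succ m.succ * b k.succ 0 0
            + a k.succ 0 0 * b 0 l.succ m.succ + a 0 0 m.succ * b k.succ l.succ 0
            + a 0 l.succ 0 * b k.succ 0 m.succ + a 0 0 0 * b k.succ l.succ m.succ
            + algebraMap ℂ R Complex.I *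
                ∑ k₁ : Fin 3, ∑ k₂ : Fin 3,
                  ((eps k k₁ k₂ : ℤ) : R) *
                    (a k₁.succ 0 0 * b k₂.succ l.succ m.succ
                      + a k₁.succ l.succ 0 * b k₂.succ 0 m.succ
                      + a k₁.succ 0 m.succ * b k₂.succ l.succ 0
                      + a k₁.succ l.succ m.succ * b k₂.succ 0 0)
            + algebraMap ℂ R Complex.I *
                ∑ l₁ : Fin 3, ∑ l₂ : Fin 3,
                  ((eps l l₁ l₂ : ℤ) : R) *
                    (a 0 l₁.succ 0 * b k.succ l₂.succ m.succ
                      + a k.succ l₁.succ 0 * b 0 l₂.succ m.succ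
                      + a 0 l₁.succ m.succ * b k.succ l₂.succ 0
                      + a k.succ l₁.succ m.succ * b 0 l₂.succ 0)
            + algebraMap ℂ R Complex.I *
                ∑ m₁ : Fin 3, ∑ m₂ : Fin 3,
                  ((eps m m₁ m₂ : ℤ) : R) *
                    (a 0 0 m₁.succ * b k.succ l.succ m₂.succ
                      + a 0 l.succ m₁.succ * b k.succ 0 m₂.succ
                      + a k.succ 0 m₁.succ * b 0 l.succ m₂.succ
                      + a k.succ l.succ m₁.succ * b 0 0 m₂.succ)
            - ∑ k₁ : Fin 3, ∑ k₂ : Fin 3, ∑ l₁ : Fin 3, ∑ l₂ : Fin 3,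
                ((eps k k₁ k₂ : ℤ) : R) * ((eps l l₁ l₂ : ℤ) : R) *
                  (a k₁.succ l₁.succ 0 * b k₂.succ l₂.succ m.succ
                    + a k₁.succ l₁.succ m.succ * b k₂.succ l₂.succ 0)
            - ∑ k₁ : Fin 3, ∑ k₂ : Fin 3, ∑ m₁ : Fin 3, ∑ m₂ : Fin 3,
                ((eps k k₁ k₂ : ℤ) : R) * ((eps m m₁ m₂ : ℤ) : R) *
                  (a k₁.succ 0 m₁.succ * b k₂.succ l.succ m₂.succ
                    + a k₁.succ l.succ m₁.succ * b k₂.succ 0 m₂.succ)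
            - ∑ l₁ : Fin 3, ∑ l₂ : Fin 3, ∑ m₁ : Fin 3, ∑ m₂ : Fin 3,
                ((eps l l₁ l₂ : ℤ) : R) * ((eps m m₁ m₂ : ℤ) : R) *
                  (a 0 l₁.succ m₁.succ * b k.succ l₂.succ m₂.succ
                    + a k.succ l₁.succ m₁.succ * b 0 l₂.succ m₂.succ)
            - algebraMap ℂ R Complex.I *
                ∑ k₁ : Fin 3, ∑ k₂ : Fin 3, ∑ l₁ : Fin 3, ∑ l₂ : Fin 3,
                  ∑ m₁ : Fin 3, ∑ m₂ : Fin 3,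
                    ((eps k k₁ k₂ : ℤ) : R) * ((eps l l₁ l₂ : ℤ) : R)
                      * ((eps m m₁ m₂ : ℤ) : R) *
                      (a k₁.succ l₁.succ m₁.succ * b k₂.succ l₂.succ m₂.succ)) := by
  intro k l m
  have iterated : ((pauli R k.succ ⊗ₖ pauli R l.succ ⊗ₖ pauli R m.succ) * (A * B)).trace =
      pauliProd k fun k₁ k₂ => pauliProd l fun l₁ l₂ => pauliProd m fun m₁ m₂ =>
        a k₁ l₁ m₁ * b k₂ l₂ m₂ := by
    simp only [ha, hb, trace_pauli_kronecker_mul, map_mul, pauliCoeff_mul, map_pauliProd]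
  -- Not `-x`: the sign has to be a scalar for `epsContract_smul` to move it out.
  have I_smul_I_smul (x : R) : Complex.I • Complex.I • x = (-1 : ℂ) • x := by
    rw [smul_smul, Complex.I_mul_I]
  rw [iterated]
  simp only [pauliProd, epsContract_add, epsContract_smul, smul_add,
    smul_comm (α := R) Complex.I (1 / 2 : ℂ), I_smul_I_smul]
  simp only [epsContract, ← Algebra.smul_def, ← zsmul_eq_mul, smul_mul_assoc, smul_add,
    Finset.sum_add_distrib, ← Finset.smul_sum]
  module
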